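/- arXiv:2206.05791 — 4 statements merged into one kernel-verified Lean document; each statement's English description precedes it below -/
import Mathlib

section
/- Let Assumptions (A1) and (A2) hold, let x > 0, and let 0 < θ < ξ x^{α−1}. Then limsup_{n→∞} n^{1−α} log E[ 1_{{X < nx}} exp(θ n^{α−1} X) ] ≤ 0. -/
/-!
Write `t = θ n^(α-1)`. On `{0 ≤ X < n x}` the exponent satisfies `t X ≤ η X^α = η φ_α(X)` with
`η = θ x^(1-α) < ξ`, so `n^(1-α) 1_{X < n x} (exp (t X) - 1)` is dominated by
`θ (|X| + |X| exp (η φ_α(X)))`. This is integrable by Young's inequality, since `X` has all moments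
and `exp (η' φ_α(X))` is integrable for some `η' ∈ (η, ξ)`. The expressions converge pointwise to
`θ X`, so by dominated convergence their expectations tend to `θ E[X] = 0`
(`tendsto_truncated_sub_one`). The inequality `log I ≤ I - 1` then gives the claim.
-/

open MeasureTheory ProbabilityTheory Filter Real Set

noncomputable section

/-- The scaling function `φ_α(x) = sign(x) |x|^α`. -/
def phi (α x : ℝ) : ℝ := Real.sign x * |x| ^ α

/-- Scaled free energy `λ_α(η) = log E[exp (η φ_α(X))]` (real-valued version; it is only
used on its finiteness domain, described separately via integrability). -/
def lam {Ω : Type*} [MeasurableSpace Ω] (P : Measure Ω) (X : Ω → ℝ) (α η : ℝ) : ℝ :=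
  Real.log (∫ ω, Real.exp (η * phi α (X ω)) ∂P)

/-- `|X| exp (η φ_α(X))` is integrable for `0 < η < ξ`: Young's inequality trades the factor
`|X|` for a slightly larger parameter, still below `ξ`. -/
lemma integrable_abs_mul_exp_phi {Ω : Type*} [MeasurableSpace Ω] (P : Measure Ω)
    [IsProbabilityMeasure P] (X : Ω → ℝ) (hmeas : Measurable X) (α ξ : ℝ)
    (hmom : ∀ k : ℕ, 1 ≤ k → Integrable (fun ω => |X ω| ^ k) P)
    (hint : ∀ η, 0 < η → η < ξ → Integrable (fun ω => Real.exp (η * phi α (X ω))) P)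
    (η : ℝ) (hη : 0 < η) (hηξ : η < ξ) :
    Integrable (fun ω => |X ω| * Real.exp (η * phi α (X ω))) P := by
  -- the exponent `p > 1` is chosen with `p η = (η + ξ) / 2 < ξ`
  set p : ℝ := (η + ξ) / (2 * η) with hp
  have hp1 : 1 < p := by rw [hp, lt_div_iff₀ (by positivity)]; linarith
  have hpη : η * p = (η + ξ) / 2 := by rw [hp]; field_simp
  have hpq := Real.HolderConjugate.conjExponent hp1
  set q := p.conjExponent
  have hq0 : 0 < q := hpq.symm.pos
  have hq1 : 1 < q := hpq.symm.lt
  obtain ⟨k, hk⟩ := exists_nat_ge q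
  have hk1 : 1 ≤ k := by
    have : (1 : ℝ) < k := hq1.trans_le hk
    exact_mod_cast this.le
  have h1 := hint ((η + ξ) / 2) (by linarith) (by linarith)
  have hbd : Integrable (fun ω => (1 + |X ω| ^ k) +
      Real.exp ((η + ξ) / 2 * phi α (X ω))) P :=
    ((integrable_const 1).add (hmom k hk1)).add h1
  refine hbd.mono' (hmeas.abs.aestronglyMeasurable.mul (hint η hη hηξ).aestronglyMeasurable) ?_
  refine Eventually.of_forall fun ω => ?_
  have hy := Real.young_inequality_of_nonneg (abs_nonneg (X ω))
    (Real.exp_pos (η * phi α (X ω))).le hpq.symm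
  have he : Real.exp (η * phi α (X ω)) ^ p = Real.exp ((η + ξ) / 2 * phi α (X ω)) := by
    rw [← Real.exp_mul, ← hpη]; ring_nf
  rw [he] at hy
  have ha : |X ω| ^ q ≤ 1 + |X ω| ^ k := by
    rcases le_total |X ω| 1 with h | h
    · have := Real.rpow_le_one (abs_nonneg (X ω)) h hq0.le
      have : 0 ≤ |X ω| ^ k := by positivity
      linarith
    · have := Real.rpow_le_rpow_of_exponent_le h hk
      rw [Real.rpow_natCast] at this
      linarith
  have hb : |X ω| ^ q / q ≤ |X ω| ^ q := div_le_self (by positivity) hq1.le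
  have hc : Real.exp ((η + ξ) / 2 * phi α (X ω)) / p ≤ Real.exp ((η + ξ) / 2 * phi α (X ω)) :=
    div_le_self (by positivity) hp1.le
  rw [Real.norm_of_nonneg (by positivity)]
  linarith

lemma integral_eq_zero_of_map_eq_map_neg {Ω : Type*} [MeasurableSpace Ω] (P : Measure Ω)
    (X : Ω → ℝ) (hmeas : Measurable X) (hsymm : P.map X = P.map (fun ω => -(X ω))) :
    ∫ ω, X ω ∂P = 0 := by
  have h1 : ∫ y, y ∂(P.map X) = ∫ ω, X ω ∂P :=
    integral_map hmeas.aemeasurable aestronglyMeasurable_id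
  have h2 : ∫ y, y ∂(P.map (fun ω => -(X ω))) = ∫ ω, -(X ω) ∂P :=
    integral_map hmeas.neg.aemeasurable aestronglyMeasurable_id
  rw [hsymm, h2, integral_neg] at h1
  linarith

/-- The linear bound on `exp (t y) - 1` that yields domination: below the truncation level `n x`,
the exponent `θ n^(α-1) y` is at most `θ x^(1-α) φ_α(y)` when `y ≥ 0`, and is negative otherwise. -/
lemma abs_truncated_le {α x θ y : ℝ} (hα : α ∈ Set.Ioo (0:ℝ) 1) (hx : 0 < x) (hθ : 0 < θ)
    {n : ℕ} (hn : 1 ≤ n) (hy : y < n * x) :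
    |(n : ℝ) ^ (1 - α) * (Real.exp (θ * (n : ℝ) ^ (α - 1) * y) - 1)| ≤
      θ * (|y| + |y| * Real.exp (θ * x ^ (1 - α) * phi α y)) := by
  have hn0 : (0 : ℝ) < n := by exact_mod_cast hn
  have hmul : (n : ℝ) ^ (1 - α) * (n : ℝ) ^ (α - 1) = 1 := by
    rw [← Real.rpow_add hn0]; simp
  have hA : 0 < (n : ℝ) ^ (1 - α) := by positivity
  have hB : 0 < (n : ℝ) ^ (α - 1) := by positivity
  set A := (n : ℝ) ^ (1 - α)
  set B := (n : ℝ) ^ (α - 1) with hBdef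
  have hAu : A * (θ * B * y) = θ * y := by linear_combination θ * y * hmul
  rw [abs_mul, abs_of_pos hA]
  rcases lt_or_ge y 0 with h | h
  · have hu : θ * B * y ≤ 0 := mul_nonpos_of_nonneg_of_nonpos (by positivity) h.le
    have h1 := Real.exp_le_one_iff.2 hu
    have h2 := Real.add_one_le_exp (θ * B * y)
    rw [abs_of_nonpos (by linarith)]
    calc A * -(Real.exp (θ * B * y) - 1) ≤ A * -(θ * B * y) := by gcongr; linarith
      _ = θ * |y| := by rw [abs_of_neg h, mul_neg, hAu]; ring
      _ ≤ _ := by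
        have : 0 ≤ |y| * Real.exp (θ * x ^ (1 - α) * phi α y) := by positivity
        gcongr; linarith
  · have hu : 0 ≤ θ * B * y := by positivity
    have h1 := Real.one_le_exp hu
    have h2 := Real.add_one_le_exp (-(θ * B * y))
    have h3 : Real.exp (θ * B * y) - 1 ≤ (θ * B * y) * Real.exp (θ * B * y) := by
      have h4 : Real.exp (-(θ * B * y)) * Real.exp (θ * B * y) = 1 := by
        rw [← Real.exp_add]; simp
      nlinarith [Real.exp_pos (θ * B * y)]
    have hexp : θ * B * y ≤ θ * x ^ (1 - α) * phi α y := by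
      rcases h.eq_or_lt with h0 | h0
      · simp [← h0, phi]
      · have hphi : phi α y = y ^ α := by
          rw [phi, Real.sign_of_pos h0, abs_of_pos h0, one_mul]
        have hyy : y = y ^ (1 - α) * y ^ α := by rw [← Real.rpow_add h0]; simp
        have hle : y ^ (1 - α) ≤ A * x ^ (1 - α) := by
          rw [← Real.mul_rpow hn0.le hx.le]
          exact Real.rpow_le_rpow h hy.le (by linarith [hα.2])
        rw [hphi]
        calc θ * B * y = θ * B * (y ^ (1 - α) * y ^ α) := by rw [← hyy]
          _ ≤ θ * B * ((A * x ^ (1 - α)) * y ^ α) := by gcongr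
          _ = θ * x ^ (1 - α) * y ^ α := by
            linear_combination θ * x ^ (1 - α) * y ^ α * hmul
    rw [abs_of_nonneg (by linarith), abs_of_nonneg h]
    calc A * (Real.exp (θ * B * y) - 1)
        ≤ A * ((θ * B * y) * Real.exp (θ * B * y)) := by gcongr
      _ = θ * (y * Real.exp (θ * B * y)) := by rw [← mul_assoc, hAu]; ring
      _ ≤ θ * (y * Real.exp (θ * x ^ (1 - α) * phi α y)) := by gcongr
      _ ≤ _ := by gcongr; linarith

lemma tendsto_scaled_exp_sub_one {α : ℝ} (hα : α ∈ Set.Ioo (0:ℝ) 1) (θ y : ℝ) :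
    Tendsto (fun n : ℕ => (n : ℝ) ^ (1 - α) * (Real.exp (θ * (n : ℝ) ^ (α - 1) * y) - 1))
      atTop (nhds (θ * y)) := by
  have hd : HasDerivAt (fun s : ℝ => Real.exp (θ * s * y)) (θ * y) 0 := by
    have h : HasDerivAt (fun s : ℝ => θ * s * y) (θ * y) 0 := by
      simpa using ((hasDerivAt_id (0 : ℝ)).const_mul θ).mul_const y
    simpa using h.exp
  have hs := hd.tendsto_slope_zero
  have ht : Tendsto (fun n : ℕ => (n : ℝ) ^ (α - 1)) atTop (nhdsWithin 0 {0}ᶜ) := by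
    refine tendsto_nhdsWithin_iff.2 ⟨?_, ?_⟩
    · have := (tendsto_rpow_neg_atTop (y := 1 - α) (by linarith [hα.2])).comp
        (tendsto_natCast_atTop_atTop (R := ℝ))
      simpa [Function.comp_def] using this
    · filter_upwards [eventually_ge_atTop 1] with n hn
      have hn0 : (0 : ℝ) < n := by exact_mod_cast hn
      exact (Real.rpow_pos_of_pos hn0 _).ne'
  refine (hs.comp ht).congr fun n => ?_
  have : ((n : ℝ) ^ (α - 1))⁻¹ = (n : ℝ) ^ (1 - α) := by
    rw [← Real.rpow_neg (Nat.cast_nonneg n)]; ring_nf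
  simp [this]

lemma tendsto_truncated_sub_one {Ω : Type*} [MeasurableSpace Ω] (P : Measure Ω)
    [IsProbabilityMeasure P] (X : Ω → ℝ) (hmeas : Measurable X) (α : ℝ)
    (hα : α ∈ Set.Ioo (0:ℝ) 1) (hmean : ∫ ω, X ω ∂P = 0) (hX : Integrable (fun ω => |X ω|) P)
    (x θ : ℝ) (hx : 0 < x) (hθ : 0 < θ)
    (hint : Integrable (fun ω => |X ω| * Real.exp (θ * x ^ (1 - α) * phi α (X ω))) P) :
    Tendsto (fun n : ℕ => ∫ ω, {ω | X ω < (n : ℝ) * x}.indicator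
      (fun ω => (n : ℝ) ^ (1 - α) * (Real.exp (θ * (n : ℝ) ^ (α - 1) * X ω) - 1)) ω ∂P)
      atTop (nhds 0) := by
  have h0 : ∫ ω, θ * X ω ∂P = 0 := by rw [integral_const_mul, hmean, mul_zero]
  rw [← h0]
  refine tendsto_integral_filter_of_dominated_convergence
    (fun ω => θ * (|X ω| + |X ω| * Real.exp (θ * x ^ (1 - α) * phi α (X ω)))) ?_ ?_
    ((hX.add hint).const_mul θ) ?_
  · refine Eventually.of_forall fun n => ?_
    exact (Measurable.indicator (by fun_prop)
      (measurableSet_lt hmeas measurable_const)).aestronglyMeasurable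
  · filter_upwards [eventually_ge_atTop 1] with n hn
    refine Eventually.of_forall fun ω => ?_
    by_cases h : X ω < n * x
    · rw [Set.indicator_of_mem (by exact h), Real.norm_eq_abs]
      exact abs_truncated_le hα hx hθ hn h
    · rw [Set.indicator_of_notMem (by exact h), norm_zero]
      positivity
  · refine Eventually.of_forall fun ω => ?_
    refine (tendsto_scaled_exp_sub_one hα θ (X ω)).congr' ?_
    have : Tendsto (fun n : ℕ => (n : ℝ) * x) atTop atTop :=
      tendsto_natCast_atTop_atTop.atTop_mul_const hx
    filter_upwards [this.eventually_gt_atTop (X ω)] with n hn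
    rw [Set.indicator_of_mem (by exact hn)]

theorem stmt7
    {Ω : Type*} [MeasurableSpace Ω] (P : Measure Ω) [IsProbabilityMeasure P]
    (X : Ω → ℝ) (hmeas : Measurable X)
    (α ξ : ℝ) (hα : α ∈ Set.Ioo (0:ℝ) 1) (hξ : 0 < ξ)
    -- Assumption (A1): symmetry and finite polynomial moments of all orders
    (hsymm : P.map X = P.map (fun ω => -(X ω)))
    (hmom : ∀ k : ℕ, 1 ≤ k → Integrable (fun ω => |X ω| ^ k) P)
    -- Assumption (A2): domain of the scaled free energy is (-ξ, ξ)
    (hdom : {η : ℝ | Integrable (fun ω => Real.exp (η * phi α (X ω))) P} = Set.Ioo (-ξ) ξ)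
    -- twice differentiable on the domain
    (hdiff : ∀ η ∈ Set.Ioo (-ξ) ξ,
      DifferentiableAt ℝ (lam P X α) η ∧ DifferentiableAt ℝ (deriv (lam P X α)) η)
    -- steepness
    (hsteepP : Tendsto (fun η => |deriv (lam P X α) η|) (nhdsWithin ξ (Set.Ioo (-ξ) ξ)) atTop)
    (hsteepM : Tendsto (fun η => |deriv (lam P X α) η|)
      (nhdsWithin (-ξ) (Set.Ioo (-ξ) ξ)) atTop)
    -- bounded relative variance
    (ξ₀ w : ℝ) (hξ₀ : ξ₀ ∈ Set.Ioo 0 ξ) (hw : 0 < w)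
    (hmono : MonotoneOn (deriv (deriv (lam P X α))) (Set.Ico ξ₀ ξ))
    (hVmono : AntitoneOn
      (fun η => deriv (deriv (lam P X α)) η / (deriv (lam P X α) η) ^ 2) (Set.Ico ξ₀ ξ))
    (hVbound : ∀ η ∈ Set.Ioo ξ₀ ξ,
      deriv (deriv (lam P X α)) η / (deriv (lam P X α) η) ^ 2 ≤ w)
    (x θ : ℝ) (hx : 0 < x) (hθ : 0 < θ) (hθξ : θ < ξ * x ^ (α - 1)) :
    atTop.limsup (fun n : ℕ =>
        (((n : ℝ) ^ (1 - α) *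
          Real.log (∫ ω in {ω | X ω < (n : ℝ) * x},
            Real.exp (θ * (n : ℝ) ^ (α - 1) * X ω) ∂P) : ℝ) : EReal)) ≤ 0 := by
  have hint : ∀ η, 0 < η → η < ξ → Integrable (fun ω => Real.exp (η * phi α (X ω))) P := by
    intro η h0 h1
    have : η ∈ {η : ℝ | Integrable (fun ω => Real.exp (η * phi α (X ω))) P} := by
      rw [hdom]; exact ⟨by linarith, h1⟩
    exact this
  have hη : θ * x ^ (1 - α) < ξ := by
    have h1 : x ^ (α - 1) * x ^ (1 - α) = 1 := by rw [← Real.rpow_add hx]; simp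
    have h2 : 0 < x ^ (1 - α) := by positivity
    calc θ * x ^ (1 - α) < ξ * x ^ (α - 1) * x ^ (1 - α) := by gcongr
      _ = ξ := by rw [mul_assoc, h1, mul_one]
  have hX : Integrable (fun ω => |X ω|) P := by simpa using hmom 1 le_rfl
  have hG := tendsto_truncated_sub_one P X hmeas α hα
    (integral_eq_zero_of_map_eq_map_neg P X hmeas hsymm) hX x θ hx hθ
    (integrable_abs_mul_exp_phi P X hmeas α ξ hmom hint _ (by positivity) hη)
  set G : ℕ → ℝ := fun n : ℕ => ∫ ω, {ω | X ω < (n : ℝ) * x}.indicator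
      (fun ω => (n : ℝ) ^ (1 - α) * (Real.exp (θ * (n : ℝ) ^ (α - 1) * X ω) - 1)) ω ∂P with hGdef
  -- taking the maximum with `0` also covers a vanishing integral, where `Real.log 0 = 0`
  have hM : Tendsto (fun n => ((max 0 (G n) : ℝ) : EReal)) atTop (nhds 0) := by
    have : Tendsto (fun n => max 0 (G n)) atTop (nhds 0) := by
      simpa using (tendsto_const_nhds (x := (0 : ℝ))).max hG
    exact (continuous_coe_real_ereal.tendsto 0).comp this
  rw [← hM.limsup_eq]
  refine limsup_le_limsup (Eventually.of_forall fun n => ?_)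
  refine EReal.coe_le_coe_iff.2 ?_
  have hA : 0 ≤ (n : ℝ) ^ (1 - α) := by positivity
  have hS : MeasurableSet {ω | X ω < (n : ℝ) * x} := measurableSet_lt hmeas measurable_const
  set S := {ω | X ω < (n : ℝ) * x} with hSdef
  set I := ∫ ω in S, Real.exp (θ * (n : ℝ) ^ (α - 1) * X ω) ∂P with hI
  have hI0 : 0 ≤ I := integral_nonneg fun ω => (Real.exp_pos _).le
  rcases hI0.eq_or_lt with h | h
  · rw [← h]; simp
  · refine le_max_of_le_right ?_
    -- a nonzero Bochner integral is that of an integrable function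
    have hint' : IntegrableOn (fun ω => Real.exp (θ * (n : ℝ) ^ (α - 1) * X ω)) S P :=
      not_imp_comm.1 integral_undef h.ne'
    have hGn : G n = (n : ℝ) ^ (1 - α) * (I - P.real S) := by
      rw [hGdef]
      simp only
      rw [integral_indicator hS, integral_const_mul,
        integral_sub hint' (integrable_const (1 : ℝ))]
      simp [hI]
    rw [hGn]
    gcongr
    have h1 := Real.log_le_sub_one_of_pos h
    have h2 : P.real S ≤ 1 := measureReal_le_one
    linarith
end
end

section
/- Let X be a real-valued random variable whose law has no atom at r₁ nor at r₂, where r₁ < r₂ are real numbers, and let a > 0. Then E[ e^{aX} 1_{{r₁ ≤ X ≤ r₂}} ] = a ∫_{r₁}^{r₂} e^{az} P(X ≥ z) dz + e^{a r₁} P(X ≥ r₁) − e^{a r₂} P(X ≥ r₂). -/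
open MeasureTheory Filter Real Set

/-!
By Fubini, `a ∫ z in [r₁, r₂], e^{az} P(X ≥ z) dz` is the expectation of the inner integral
`∫ z in [r₁, r₂], a e^{az} 1_{z ≤ X} dz`. The latter vanishes for `X < r₁` and equals
`e^{a min(r₂, X)} - e^{a r₁}` for `r₁ ≤ X`. Away from the null event `X = r₂` this is
`e^{aX} 1_{r₁ ≤ X ≤ r₂} - e^{a r₁} 1_{r₁ ≤ X} + e^{a r₂} 1_{r₂ ≤ X}`, and taking expectations
gives the formula.
-/

lemma integral_Icc_mul_exp (a u v : ℝ) (h : u ≤ v) :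
    ∫ z in Icc u v, a * Real.exp (a * z) = Real.exp (a * v) - Real.exp (a * u) := by
  rw [integral_Icc_eq_integral_Ioc, ← intervalIntegral.integral_of_le h]
  refine intervalIntegral.integral_eq_sub_of_hasDerivAt (f := fun z => Real.exp (a * z)) ?_ ?_
  · intro z _
    have := ((hasDerivAt_id z).const_mul a).exp
    simpa [mul_comm] using this
  · exact Continuous.intervalIntegrable (by fun_prop) _ _

/-- The inner integral of the Fubini argument, at the value `x ≠ r₂` of the random variable. -/
lemma integral_Icc_indicator_exp (a r₁ r₂ x : ℝ) (hr : r₁ < r₂) (hx : x ≠ r₂) :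
    ∫ z in Icc r₁ r₂, (Iic x).indicator (fun z => a * Real.exp (a * z)) z =
      (Icc r₁ r₂).indicator (fun y => Real.exp (a * y)) x
        - (Ici r₁).indicator (fun _ => Real.exp (a * r₁)) x
        + (Ici r₂).indicator (fun _ => Real.exp (a * r₂)) x := by
  rw [setIntegral_indicator measurableSet_Iic]
  have hset : Icc r₁ r₂ ∩ Iic x = Icc r₁ (min r₂ x) := by
    ext z; simp [and_assoc]
  rw [hset]
  rcases lt_or_ge x r₁ with h | h
  · have h2 : ¬ r₂ ≤ x := by linarith
    rw [Icc_eq_empty (by simp [h])]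
    simp [indicator, h.not_ge, h2]
  · rw [integral_Icc_mul_exp a r₁ _ (le_min hr.le h)]
    rcases lt_or_gt_of_ne hx with h2 | h2
    · simp [indicator, h, h2.le, h2.not_ge]
    · simp [indicator, h, h2.le, h2.not_ge]
      ring

theorem stmt8
    {Ω : Type*} [MeasurableSpace Ω] (P : Measure Ω) [IsProbabilityMeasure P]
    (X : Ω → ℝ) (hmeas : Measurable X)
    (r₁ r₂ a : ℝ) (hr : r₁ < r₂) (ha : 0 < a)
    (hatom₁ : P {ω | X ω = r₁} = 0) (hatom₂ : P {ω | X ω = r₂} = 0) :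
    ∫ ω in {ω | r₁ ≤ X ω ∧ X ω ≤ r₂}, Real.exp (a * X ω) ∂P =
      a * (∫ z in Set.Icc r₁ r₂, Real.exp (a * z) * (P {ω | z ≤ X ω}).toReal)
        + Real.exp (a * r₁) * (P {ω | r₁ ≤ X ω}).toReal
        - Real.exp (a * r₂) * (P {ω | r₂ ≤ X ω}).toReal := by
  have hM (r : ℝ) : MeasurableSet {ω | r ≤ X ω} := measurableSet_le measurable_const hmeas
  have hM2 : MeasurableSet {ω | r₁ ≤ X ω ∧ X ω ≤ r₂} := hmeas measurableSet_Icc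
  have hI1 : Integrable ({ω | r₁ ≤ X ω ∧ X ω ≤ r₂}.indicator
      (fun ω => Real.exp (a * X ω))) P := by
    refine Integrable.of_bound
      (Measurable.indicator (by fun_prop) hM2).aestronglyMeasurable (Real.exp (a * r₂)) ?_
    refine Eventually.of_forall fun ω => ?_
    by_cases h : ω ∈ {ω | r₁ ≤ X ω ∧ X ω ≤ r₂}
    · rw [indicator_of_mem h, Real.norm_eq_abs, Real.abs_exp]
      exact Real.exp_le_exp.2 (mul_le_mul_of_nonneg_left h.2 ha.le)
    · rw [indicator_of_notMem h, norm_zero]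
      positivity
  have hI2 (r : ℝ) : Integrable ({ω | r ≤ X ω}.indicator (fun _ => Real.exp (a * r))) P :=
    (integrable_const _).indicator (hM r)
  have hF : Integrable (Function.uncurry fun z ω =>
      (Iic (X ω)).indicator (fun z => a * Real.exp (a * z)) z)
      ((volume.restrict (Icc r₁ r₂)).prod P) := by
    have hS : MeasurableSet {p : ℝ × Ω | p.1 ≤ X p.2} :=
      measurableSet_le measurable_fst (hmeas.comp measurable_snd)
    have hE : Integrable (fun z => a * Real.exp (a * z)) (volume.restrict (Icc r₁ r₂)) :=
      Continuous.integrableOn_Icc (by fun_prop)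
    exact (hE.comp_fst P).indicator hS
  have hcdf : a * (∫ z in Icc r₁ r₂, Real.exp (a * z) * (P {ω | z ≤ X ω}).toReal) =
      ∫ z in Icc r₁ r₂, ∫ ω, (Iic (X ω)).indicator (fun z => a * Real.exp (a * z)) z ∂P := by
    rw [← integral_const_mul]
    congr 1 with z
    have : (fun ω => (Iic (X ω)).indicator (fun z => a * Real.exp (a * z)) z) =
        {ω | z ≤ X ω}.indicator (fun _ => a * Real.exp (a * z)) := by
      ext ω; simp [indicator]
    rw [this, integral_indicator_const _ (hM z), smul_eq_mul, measureReal_def]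
    ring
  have hne : ∀ᵐ ω ∂P, X ω ≠ r₂ := by
    rw [ae_iff]; simpa using hatom₂
  have hinner : ∫ ω, (∫ z in Icc r₁ r₂,
        (Iic (X ω)).indicator (fun z => a * Real.exp (a * z)) z) ∂P =
      ∫ ω, ({ω | r₁ ≤ X ω ∧ X ω ≤ r₂}.indicator (fun ω => Real.exp (a * X ω)) ω
        - {ω | r₁ ≤ X ω}.indicator (fun _ => Real.exp (a * r₁)) ω
        + {ω | r₂ ≤ X ω}.indicator (fun _ => Real.exp (a * r₂)) ω) ∂P := by
    refine integral_congr_ae ?_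
    filter_upwards [hne] with ω hω
    rw [integral_Icc_indicator_exp a r₁ r₂ _ hr hω]
    rfl
  have hI3 : Integrable (fun ω =>
      {ω | r₁ ≤ X ω ∧ X ω ≤ r₂}.indicator (fun ω => Real.exp (a * X ω)) ω
        - {ω | r₁ ≤ X ω}.indicator (fun _ => Real.exp (a * r₁)) ω) P := hI1.sub (hI2 r₁)
  rw [hcdf, integral_integral_swap hF, hinner, integral_add hI3 (hI2 r₂),
    integral_sub hI1 (hI2 r₁), integral_indicator hM2, integral_indicator_const _ (hM r₁),
    integral_indicator_const _ (hM r₂)]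
  simp only [smul_eq_mul, measureReal_def]
  ring
end

section
/- Let Assumptions (A1) and (A2) hold, and let x > 0 and γ ∈ (0, x). For all sufficiently large n let η_n be the unique element of (0,ξ) with λ_α′(η_n) = (nx)^α (it exists since λ_α′ is increasing and steep). Then there exist a constant c > 0 and N ∈ ℕ such that for every n ≥ N, μ̃_{η_n}( { y ∈ ℝ : (nx)^α − (nγ)^α ≤ φ_α(y) ≤ (nx)^α + (nγ)^α } ) ≥ c. -/
/-!
Put `Y = φ_α(X)`, with cumulant generating function `λ`. Under the law tilted by `η`, the variable
`Y` has mean `T = λ'(η)` and variance `λ''(η)`, and for `λ'(η) = (n x)^α` the window is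
`|Y - T| ≤ δ T` with the fixed ratio `δ = (γ / x)^α < 1`. So it suffices to bound the tilted mass
of this window from below as `η ↑ ξ` (`eventually_le_tilted_window`). Existence and uniqueness of
`η_n` follow from `λ'' > 0` (a degenerate `Y` would have all exponential moments) and steepness.

The relative variance `V = λ'' / λ'^2` is monotone, hence has a limit `v ≥ 0` at `ξ`.

* If `v = 0`, Chebyshev's inequality shows that the mass of the window tends to `1`.
* If `v > 0`, then `(1 / λ')' = -V → -v`, so `(ξ - η) λ'(η) → 1 / v` by L'Hôpital's rule
  (`tendsto_mul_of_relative_variance`). Integrating,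
  `λ(η - j (ξ - η)) - λ(η) → -(1 / v) log (1 + j)` for every natural number `j`
  (`tendsto_sub_of_tendsto_mul`): under the tilted law, the Laplace transform of
  `Z = (ξ - η) Y` at each `j` tends to that of the Gamma law of shape `1 / v`. A Karamata-type
  argument (Weierstrass approximation in the variable `exp (-Z)`,
  `eventually_le_measureReal_window`) bounds the mass `Z` gives to a fixed interval in `(0, ∞)`
  from below. The interval is taken around `1 / v = lim (ξ - η) T`.
-/

open MeasureTheory ProbabilityTheory Filter Real Set

noncomputable section

/-! ### Gamma limits from Laplace transforms -/

lemma integral_exp_neg_pow_gammaMeasure {a : ℝ} (ha : 0 < a) (j : ℕ) :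
    ∫ z, (exp (-z)) ^ j ∂(gammaMeasure a 1) = (1 / (1 + (j : ℝ))) ^ a := by
  have hj : (0 : ℝ) < 1 + j := by positivity
  have hG := Gamma_pos_of_pos ha
  rw [gammaMeasure, integral_withDensity_eq_integral_toReal_smul
    (by unfold gammaPDF; fun_prop) (by simp [gammaPDF])]
  have h1 : (fun z : ℝ => (gammaPDF a 1 z).toReal • (exp (-z)) ^ j) =
      (Ici (0 : ℝ)).indicator
        (fun z => (1 / Gamma a) * (z ^ (a - 1) * exp (-((1 + (j : ℝ)) * z)))) := by
    funext z
    rw [gammaPDF, ENNReal.toReal_ofReal (gammaPDFReal_nonneg ha one_pos z), gammaPDFReal]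
    by_cases hz : 0 ≤ z
    · rw [indicator_of_mem (show z ∈ Ici (0 : ℝ) from hz), if_pos hz, ← exp_nat_mul,
        show -((1 + (j : ℝ)) * z) = -(1 * z) + j * -z by ring, exp_add, one_rpow, smul_eq_mul]
      ring
    · rw [indicator_of_notMem (show z ∉ Ici (0 : ℝ) from hz), if_neg hz, zero_smul]
  rw [h1, integral_indicator measurableSet_Ici, integral_Ici_eq_integral_Ioi,
    integral_const_mul, integral_rpow_mul_exp_neg_mul_Ioi ha hj]
  field_simp

lemma ae_nonneg_gammaMeasure (a : ℝ) : ∀ᵐ z ∂(gammaMeasure a 1), 0 ≤ z := by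
  rw [gammaMeasure, ae_withDensity_iff (by unfold gammaPDF; fun_prop)]
  refine ae_of_all _ fun z hz => ?_
  by_contra h
  exact hz (gammaPDF_of_neg (not_le.mp h))

lemma integral_gammaMeasure_pos {a : ℝ} (ha : 0 < a) {g : ℝ → ℝ} (hg0 : 0 ≤ g)
    (hgi : Integrable g (gammaMeasure a 1)) {p q : ℝ} (hp : 0 < p) (hpq : p < q)
    (hpos : ∀ z ∈ Ioo p q, 0 < g z) : 0 < ∫ z, g z ∂(gammaMeasure a 1) := by
  rw [integral_pos_iff_support_of_nonneg hg0 hgi]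
  refine lt_of_lt_of_le ?_ (measure_mono (s := Ioo p q) fun z hz => (hpos z hz).ne')
  rw [gammaMeasure, withDensity_apply _ measurableSet_Ioo,
    setLIntegral_pos_iff (by unfold gammaPDF; fun_prop)]
  refine lt_of_lt_of_le (b := volume (Ioo p q)) (by simp [hpq]) (measure_mono fun z hz => ?_)
  refine ⟨?_, hz⟩
  simpa [gammaPDF] using gammaPDFReal_pos ha one_pos (hp.trans hz.1)

lemma tendsto_integral_polynomial {ι Ω : Type*} [MeasurableSpace Ω] {l : Filter ι}
    {μ : ι → Measure Ω} {U : ι → Ω → ℝ} {m : ℕ → ℝ}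
    (hint : ∀ j : ℕ, ∀ᶠ i in l, Integrable (fun ω => U i ω ^ j) (μ i))
    (hlim : ∀ j : ℕ, Tendsto (fun i => ∫ ω, U i ω ^ j ∂(μ i)) l (nhds (m j)))
    (p : Polynomial ℝ) :
    (∀ᶠ i in l, Integrable (fun ω => p.eval (U i ω)) (μ i)) ∧
    Tendsto (fun i => ∫ ω, p.eval (U i ω) ∂(μ i)) l
      (nhds (∑ j ∈ Finset.range (p.natDegree + 1), p.coeff j * m j)) := by
  have hall : ∀ᶠ i in l, ∀ j ∈ Finset.range (p.natDegree + 1),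
      Integrable (fun ω => U i ω ^ j) (μ i) :=
    (Filter.eventually_all_finset _).2 fun j _ => hint j
  constructor
  · filter_upwards [hall] with i hi
    simp_rw [Polynomial.eval_eq_sum_range]
    exact integrable_finsetSum _ fun j hj => (hi j hj).const_mul _
  · refine (tendsto_finsetSum _ fun j _ => (hlim j).const_mul (p.coeff j)).congr' ?_
    filter_upwards [hall] with i hi
    simp_rw [Polynomial.eval_eq_sum_range]
    rw [integral_finsetSum _ fun j hj => (hi j hj).const_mul _]
    simp_rw [integral_const_mul]

/-- If the Laplace transforms of `Z i` converge at every natural number to those of the Gamma law of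
shape `a`, then the mass of a fixed interval `[p, q]` in `(0, ∞)` is eventually bounded below. The
variables `Z i` may take negative values; those are controlled by large powers of `exp (-Z i)`,
whose expectations converge to the small number `(1 + K)^(-a)`. -/
lemma eventually_le_measureReal_window {ι Ω : Type*} [MeasurableSpace Ω] {l : Filter ι}
    {μ : ι → Measure Ω} {Z : ι → Ω → ℝ} {a : ℝ} (ha : 0 < a)
    (hprob : ∀ᶠ i in l, IsProbabilityMeasure (μ i)) (hmeas : ∀ i, Measurable (Z i))
    (hint : ∀ j : ℕ, ∀ᶠ i in l, Integrable (fun ω => exp (-(Z i ω)) ^ j) (μ i))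
    (hlim : ∀ j : ℕ, Tendsto (fun i => ∫ ω, exp (-(Z i ω)) ^ j ∂(μ i)) l
      (nhds ((1 / (1 + (j : ℝ))) ^ a)))
    {p q : ℝ} (hp : 0 < p) (hpq : p < q) :
    ∃ c : ℝ, 0 < c ∧ ∀ᶠ i in l, c ≤ (μ i).real {ω | p ≤ Z i ω ∧ Z i ω ≤ q} := by
  have hGp : IsProbabilityMeasure (gammaMeasure a 1) :=
    isProbabilityMeasure_gammaMeasure ha one_pos
  -- a continuous bump in the variable `u = exp (-z)`, positive exactly for `p < z < q`
  obtain ⟨f, hfc, hf0, hf1, hfpos, hfzero⟩ : ∃ f : ℝ → ℝ, Continuous f ∧ (∀ u, 0 ≤ f u) ∧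
      (∀ u, f u ≤ 1) ∧ (∀ u ∈ Ioo (exp (-q)) (exp (-p)), 0 < f u) ∧
      (∀ u, u ∉ Icc (exp (-q)) (exp (-p)) → f u = 0) := by
    refine ⟨fun u => min 1 (max 0 (min (u - exp (-q)) (exp (-p) - u))), by fun_prop,
      fun u => by positivity, fun u => min_le_left _ _, fun u hu => ?_, fun u hu => ?_⟩
    · have h1 := sub_pos.2 hu.1
      have h2 := sub_pos.2 hu.2
      exact lt_min one_pos (lt_max_of_lt_right (lt_min h1 h2))
    · have : min (u - exp (-q)) (exp (-p) - u) ≤ 0 := by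
        rw [mem_Icc, not_and_or, not_le, not_le] at hu
        rcases hu with h | h
        · exact (min_le_left _ _).trans (by linarith)
        · exact (min_le_right _ _).trans (by linarith)
      simp [max_eq_left this]
  set I := ∫ z, f (exp (-z)) ∂(gammaMeasure a 1) with hI
  have hfi : Integrable (fun z => f (exp (-z))) (gammaMeasure a 1) :=
    Integrable.of_bound (C := 1) (by fun_prop) (ae_of_all _ fun z => by
      rw [norm_of_nonneg (hf0 _)]; exact hf1 _)
  have hIpos : 0 < I := by
    refine integral_gammaMeasure_pos ha (fun z => hf0 _) hfi hp hpq fun z hz => hfpos _ ?_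
    exact ⟨exp_lt_exp.2 (by linarith [hz.2]), exp_lt_exp.2 (by linarith [hz.1])⟩
  obtain ⟨P, hP⟩ := exists_polynomial_near_of_continuousOn 0 1 f hfc.continuousOn (I / 8)
    (by positivity)
  have hintG : ∀ j : ℕ, Integrable (fun z => exp (-z) ^ j) (gammaMeasure a 1) := fun j => by
    refine Integrable.of_bound (C := 1) (by fun_prop) ?_
    filter_upwards [ae_nonneg_gammaMeasure a] with z hz
    rw [norm_of_nonneg (by positivity)]
    exact pow_le_one₀ (exp_pos _).le (exp_le_one_iff.2 (by linarith))
  -- the polynomial lemma for the constant sequence expresses the Gamma integral of `P` by moments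
  have hPG := tendsto_integral_polynomial (l := (atTop : Filter ℕ))
    (μ := fun _ => gammaMeasure a 1) (U := fun _ z => exp (-z))
    (fun j => Eventually.of_forall fun _ => hintG j)
    (fun j => by simp only [integral_exp_neg_pow_gammaMeasure ha j]; exact tendsto_const_nhds) P
  have hPGi : Integrable (fun z => P.eval (exp (-z))) (gammaMeasure a 1) :=
    hPG.1.exists.choose_spec
  have hPGeq := tendsto_nhds_unique tendsto_const_nhds hPG.2
  set S := ∑ j ∈ Finset.range (P.natDegree + 1), P.coeff j * (1 / (1 + (j : ℝ))) ^ a with hS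
  have hSI : I - I / 8 ≤ S := by
    rw [← hPGeq]
    have : ∫ z, (f (exp (-z)) - I / 8) ∂(gammaMeasure a 1) = I - I / 8 := by
      rw [integral_sub hfi (integrable_const _)]; simp [hI]
    rw [← this]
    refine integral_mono_ae (hfi.sub (integrable_const _)) hPGi ?_
    filter_upwards [ae_nonneg_gammaMeasure a] with z hz
    have := hP (exp (-z)) ⟨(exp_pos _).le, exp_le_one_iff.2 (by linarith)⟩
    rw [abs_lt] at this
    linarith [this.1]
  -- For `u > 1` the polynomial is dominated by `C u ^ K`; with `K` large, the expectation of this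
  -- term tends to `C (1 + K)^(-a) < I / 8`.
  set C := ∑ j ∈ Finset.range (P.natDegree + 1), |P.coeff j| with hC
  have hC0 : 0 ≤ C := Finset.sum_nonneg fun _ _ => abs_nonneg _
  have hK : Tendsto (fun K : ℕ => C * (1 / (1 + (K : ℝ))) ^ a) atTop (nhds 0) := by
    have h1 : Tendsto (fun K : ℕ => 1 / (1 + (K : ℝ))) atTop (nhds 0) := by
      simpa [add_comm] using tendsto_one_div_add_atTop_nhds_zero_nat (𝕜 := ℝ)
    have h2 := (h1.rpow_const (p := a) (Or.inr ha.le)).const_mul C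
    simpa [zero_rpow ha.ne'] using h2
  obtain ⟨K, hKs, hKd⟩ := ((hK.eventually (gt_mem_nhds (show 0 < I / 8 by positivity))).and
    (eventually_ge_atTop P.natDegree)).exists
  have hbound : ∀ u : ℝ, 0 ≤ u → P.eval u - I / 8 - C * u ^ K ≤ f u := by
    intro u hu
    rcases le_total u 1 with h1 | h1
    · have := hP u ⟨hu, h1⟩
      rw [abs_lt] at this
      have : 0 ≤ C * u ^ K := by positivity
      linarith
    · have : P.eval u ≤ C * u ^ K := by
        rw [Polynomial.eval_eq_sum_range, hC, Finset.sum_mul]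
        refine Finset.sum_le_sum fun j hj => ?_
        have hj' : j ≤ K := by have := Finset.mem_range.1 hj; omega
        exact mul_le_mul (le_abs_self _) (pow_le_pow_right₀ h1 hj') (by positivity)
          (abs_nonneg _)
      linarith [hf0 u]
  have hPi := tendsto_integral_polynomial hint hlim P
  have hfin : Tendsto (fun i => (∫ ω, P.eval (exp (-(Z i ω))) ∂(μ i)) - I / 8
      - C * ∫ ω, exp (-(Z i ω)) ^ K ∂(μ i)) l
      (nhds (S - I / 8 - C * (1 / (1 + (K : ℝ))) ^ a)) :=
    (hPi.2.sub_const _).sub ((hlim K).const_mul C)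
  refine ⟨I / 2, by positivity, ?_⟩
  filter_upwards [hprob, hPi.1, hint K,
    hfin.eventually (lt_mem_nhds (show I / 2 < _ by linarith))] with i hi1 hi2 hi3 hi4
  have hms : MeasurableSet {ω | p ≤ Z i ω ∧ Z i ω ≤ q} :=
    (measurableSet_le measurable_const (hmeas i)).inter
      (measurableSet_le (hmeas i) measurable_const)
  refine hi4.le.trans ?_
  have e1 : (∫ ω, P.eval (exp (-(Z i ω))) ∂(μ i)) - I / 8
      - C * ∫ ω, exp (-(Z i ω)) ^ K ∂(μ i) =
      ∫ ω, (P.eval (exp (-(Z i ω))) - I / 8 - C * exp (-(Z i ω)) ^ K) ∂(μ i) := by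
    have hi5 : Integrable (fun ω => P.eval (exp (-(Z i ω))) - I / 8) (μ i) :=
      hi2.sub (integrable_const _)
    rw [integral_sub hi5 (hi3.const_mul C),
      integral_sub hi2 (integrable_const _), integral_const_mul]
    simp
  rw [e1, ← integral_indicator_one hms]
  refine integral_mono ((hi2.sub (integrable_const _)).sub (hi3.const_mul C))
    ((integrable_const (1 : ℝ)).indicator hms) fun ω => ?_
  refine (hbound _ (exp_pos _).le).trans ?_
  by_cases hω : ω ∈ {ω | p ≤ Z i ω ∧ Z i ω ≤ q}
  · rw [indicator_of_mem hω]; exact hf1 _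
  · rw [indicator_of_notMem hω]
    refine (hfzero _ fun h => hω ?_).le
    have h1 := exp_le_exp.1 h.1
    have h2 := exp_le_exp.1 h.2
    exact ⟨by linarith, by linarith⟩

/-! ### Asymptotics of the free energy at the edge of its domain -/

/-- L'Hôpital's rule for `(1 / L1) / (ξ - η)`, since `1 / L1` has derivative `-L2 / L1 ^ 2`. -/
lemma tendsto_mul_of_relative_variance {ξ v : ℝ} (hv : 0 < v) {L1 L2 : ℝ → ℝ}
    (hL1 : ∀ᶠ η in nhdsWithin ξ (Iio ξ), HasDerivAt L1 (L2 η) η)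
    (htop : Tendsto L1 (nhdsWithin ξ (Iio ξ)) atTop)
    (hV : Tendsto (fun η => L2 η / L1 η ^ 2) (nhdsWithin ξ (Iio ξ)) (nhds v)) :
    Tendsto (fun η => (ξ - η) * L1 η) (nhdsWithin ξ (Iio ξ)) (nhds (1 / v)) := by
  have hg : Tendsto (fun η => ξ - η) (nhdsWithin ξ (Iio ξ)) (nhds 0) := by
    have : Tendsto (fun η : ℝ => ξ - η) (nhds ξ) (nhds (ξ - ξ)) :=
      (continuous_const.sub continuous_id).tendsto ξ
    rw [sub_self] at this
    exact this.mono_left nhdsWithin_le_nhds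
  have key := HasDerivAt.lhopital_zero_nhdsLT (a := ξ) (l := nhds v)
    (f := fun η => (L1 η)⁻¹) (f' := fun η => -L2 η / L1 η ^ 2)
    (g := fun η => ξ - η) (g' := fun _ => -1)
    (by
      filter_upwards [hL1, htop.eventually_gt_atTop 0] with η h1 h2
      exact h1.inv h2.ne')
    (Eventually.of_forall fun η => by simpa using (hasDerivAt_id η).const_sub ξ)
    (Eventually.of_forall fun _ => by norm_num)
    htop.inv_tendsto_atTop hg
    (hV.congr fun η => by ring)
  have := key.inv₀ hv.ne'
  rw [one_div]
  refine this.congr fun η => ?_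
  rw [inv_div, div_inv_eq_mul]

/-- If `L'(η)` is asymptotic to `a / (ξ - η)`, the increment of `L` between two points whose
distances to `ξ` have ratio `1 + j` is asymptotically that of `-a log (ξ - ·)`. -/
lemma tendsto_sub_of_tendsto_mul {ξ a : ℝ} {L L1 : ℝ → ℝ}
    (hL : ∀ᶠ η in nhdsWithin ξ (Iio ξ), HasDerivAt L (L1 η) η)
    (hmul : Tendsto (fun η => (ξ - η) * L1 η) (nhdsWithin ξ (Iio ξ)) (nhds a)) (j : ℕ) :
    Tendsto (fun η => L (η - j * (ξ - η)) - L η) (nhdsWithin ξ (Iio ξ))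
      (nhds (-(a * log (1 + j)))) := by
  rw [Metric.tendsto_nhds]
  intro ε hε
  have hj : (0 : ℝ) < j + 1 := by positivity
  have hε' : 0 < ε / (j + 1) := by positivity
  obtain ⟨b, hb, hbs⟩ := (mem_nhdsLT_iff_exists_Ioo_subset).1
    (hL.and ((Metric.tendsto_nhds.1 hmul) _ hε'))
  have hcont : Tendsto (fun η : ℝ => η - j * (ξ - η)) (nhdsWithin ξ (Iio ξ)) (nhds ξ) := by
    have : Tendsto (fun η : ℝ => η - j * (ξ - η)) (nhds ξ) (nhds (ξ - j * (ξ - ξ))) :=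
      (by fun_prop : Continuous fun η : ℝ => η - j * (ξ - η)).tendsto ξ
    rw [sub_self, mul_zero, sub_zero] at this
    exact this.mono_left nhdsWithin_le_nhds
  filter_upwards [hcont.eventually (lt_mem_nhds hb), self_mem_nhdsWithin] with η h1 h2
  have hη : 0 < ξ - η := sub_pos.2 h2
  have hle : η - j * (ξ - η) ≤ η := by
    have : (0 : ℝ) ≤ j * (ξ - η) := by positivity
    linarith
  have hsub : ∀ s ∈ Icc (η - j * (ξ - η)) η, s ∈ Ioo b ξ := fun s hs =>
    ⟨lt_of_lt_of_le h1 hs.1, lt_of_le_of_lt hs.2 h2⟩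
  -- `L + a log (ξ - ·)` is almost constant on `[η - j (ξ - η), η]`
  have hmvt := (convex_Icc (η - j * (ξ - η)) η).norm_image_sub_le_of_norm_hasDerivWithin_le
    (f := fun s => L s + a * log (ξ - s)) (f' := fun s => L1 s + a * (-1 / (ξ - s)))
    (C := ε / (j + 1) / (ξ - η)) (x := η) (y := η - j * (ξ - η))
    (fun s hs => by
      have h3 := (hbs (hsub s hs)).1
      have h4 : ξ - s ≠ 0 := (sub_pos.2 (hsub s hs).2).ne'
      have h5 : HasDerivAt (fun s => ξ - s) (-1) s := by
        simpa using (hasDerivAt_id s).const_sub ξ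
      exact (h3.add ((h5.log h4).const_mul a)).hasDerivWithinAt)
    (fun s hs => by
      have h3 := (hbs (hsub s hs)).2
      have h4 : 0 < ξ - s := sub_pos.2 (hsub s hs).2
      rw [Real.dist_eq] at h3
      have h5 : L1 s + a * (-1 / (ξ - s)) = ((ξ - s) * L1 s - a) / (ξ - s) := by
        field_simp; ring
      rw [Real.norm_eq_abs, h5, abs_div, abs_of_pos h4]
      exact div_le_div₀ hε'.le h3.le hη (by linarith [hs.2]))
    ⟨hle, le_rfl⟩ ⟨le_rfl, hle⟩
  have hlog : log (ξ - (η - j * (ξ - η))) = log (1 + j) + log (ξ - η) := by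
    rw [← log_mul (by positivity) hη.ne']; congr 1; ring
  simp only [hlog] at hmvt
  rw [Real.norm_eq_abs, Real.norm_eq_abs, show η - j * (ξ - η) - η = -(j * (ξ - η)) by ring,
    abs_neg, abs_of_nonneg (by positivity : (0 : ℝ) ≤ j * (ξ - η))] at hmvt
  rw [Real.dist_eq]
  calc |L (η - j * (ξ - η)) - L η - -(a * log (1 + j))|
      = |L (η - j * (ξ - η)) + a * (log (1 + j) + log (ξ - η)) - (L η + a * log (ξ - η))| := by
        congr 1; ring
    _ ≤ ε / (j + 1) / (ξ - η) * (j * (ξ - η)) := hmvt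
    _ = ε * (j / (j + 1)) := by field_simp
    _ < ε * 1 := by
        refine mul_lt_mul_of_pos_left ?_ hε
        rw [div_lt_one hj]; linarith
    _ = ε := mul_one _

/-! ### Tilted laws -/

/-- The second derivative is a variance, and it cannot vanish: an almost surely constant variable has
all exponential moments, which contradicts the bounded domain. -/
lemma deriv_deriv_cgf_pos {Ω : Type*} [MeasurableSpace Ω] {ν : Measure Ω}
    [IsProbabilityMeasure ν] {Y : Ω → ℝ} {ξ : ℝ}
    (hdom : integrableExpSet Y ν = Ioo (-ξ) ξ) {η : ℝ} (hη : η ∈ Ioo (-ξ) ξ) :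
    0 < deriv (deriv (cgf Y ν)) η := by
  have hmem : η ∈ interior (integrableExpSet Y ν) := by rwa [hdom, interior_Ioo]
  have hvar := variance_tilted_mul hmem
  rw [iteratedDeriv_succ, iteratedDeriv_one] at hvar
  rw [← hvar]
  have hexp : Integrable (fun ω => exp (η * Y ω)) ν :=
    interior_subset (s := integrableExpSet Y ν) hmem
  have := isProbabilityMeasure_tilted hexp
  refine (variance_nonneg _ _).lt_of_ne fun h0 => ?_
  have hae := ae_eq_integral_of_variance_eq_zero (memLp_tilted_mul hmem 2) h0.symm
  have hae' := (absolutelyContinuous_tilted hexp).ae_le hae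
  set C := ∫ ω, Y ω ∂(ν.tilted fun ω => η * Y ω)
  have : ξ ∈ integrableExpSet Y ν := by
    refine (integrable_const (exp (ξ * C))).congr ?_
    filter_upwards [hae'] with ω hω
    rw [hω]
  rw [hdom] at this
  exact lt_irrefl _ this.2

lemma strictMonoOn_deriv_cgf {Ω : Type*} [MeasurableSpace Ω] {ν : Measure Ω}
    [IsProbabilityMeasure ν] {Y : Ω → ℝ} {ξ : ℝ}
    (hdom : integrableExpSet Y ν = Ioo (-ξ) ξ) :
    StrictMonoOn (deriv (cgf Y ν)) (Ioo (-ξ) ξ) := by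
  refine strictMonoOn_of_deriv_pos (convex_Ioo _ _) (fun η hη => ?_) fun η hη => ?_
  · have hmem : η ∈ interior (integrableExpSet Y ν) := by rwa [hdom, interior_Ioo]
    exact (analyticOnNhd_cgf.deriv η hmem).continuousAt.continuousWithinAt
  · rw [interior_Ioo] at hη
    exact deriv_deriv_cgf_pos hdom hη

lemma tendsto_deriv_cgf_atTop {Ω : Type*} [MeasurableSpace Ω] {ν : Measure Ω}
    [IsProbabilityMeasure ν] {Y : Ω → ℝ} {ξ : ℝ} (hξ : 0 < ξ)
    (hdom : integrableExpSet Y ν = Ioo (-ξ) ξ)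
    (hsteep : Tendsto (fun η => |deriv (cgf Y ν) η|) (nhdsWithin ξ (Iio ξ)) atTop) :
    Tendsto (deriv (cgf Y ν)) (nhdsWithin ξ (Iio ξ)) atTop := by
  refine hsteep.congr' ?_
  filter_upwards [hsteep.eventually_gt_atTop |deriv (cgf Y ν) 0|,
    Ioo_mem_nhdsLT hξ] with η h1 h2
  refine abs_of_nonneg ?_
  have h3 : deriv (cgf Y ν) 0 ≤ deriv (cgf Y ν) η :=
    (strictMonoOn_deriv_cgf hdom).monotoneOn ⟨by linarith, hξ⟩ ⟨by linarith [h2.1], h2.2⟩ h2.1.le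
  by_contra h
  rw [not_le] at h
  rw [abs_of_neg h] at h1
  linarith [neg_abs_le (deriv (cgf Y ν) 0)]

/-- The Laplace transform at `j` of `d Y` under the tilted law, in terms of the cumulant generating
function of `Y`. -/
lemma integral_exp_neg_pow_tilted {Ω : Type*} [MeasurableSpace Ω] {ν : Measure Ω}
    [IsProbabilityMeasure ν] {Y : Ω → ℝ} {η d : ℝ} (j : ℕ)
    (h1 : η ∈ integrableExpSet Y ν) (h2 : η - j * d ∈ integrableExpSet Y ν) :
    Integrable (fun ω => exp (-(d * Y ω)) ^ j) (ν.tilted fun ω => η * Y ω) ∧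
    ∫ ω, exp (-(d * Y ω)) ^ j ∂(ν.tilted fun ω => η * Y ω) =
      exp (cgf Y ν (η - j * d) - cgf Y ν η) := by
  have e : ∀ ω, exp (-(d * Y ω)) ^ j = exp (-(j * d * Y ω)) := fun ω => by
    rw [← exp_nat_mul]; congr 1; ring
  simp_rw [e]
  constructor
  · rw [integrable_tilted_iff h1]
    refine Integrable.congr h2 (ae_of_all _ fun ω => ?_)
    simp only [smul_eq_mul]
    rw [← exp_add]; congr 1; ring
  · rw [integral_exp_tilted, exp_sub, exp_cgf h1, exp_cgf h2, mgf, mgf]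
    congr 2
    funext ω
    simp only [Pi.add_apply]
    congr 1; ring

/-- Under the tilted laws, the window of relative half-width `δ` around the mean keeps a mass bounded
below as `η ↑ ξ`. -/
lemma eventually_le_tilted_window {Ω : Type*} [MeasurableSpace Ω] {ν : Measure Ω}
    [IsProbabilityMeasure ν] {Y : Ω → ℝ} (hY : Measurable Y) {ξ ξ₀ δ : ℝ} (hξ : 0 < ξ)
    (hdom : integrableExpSet Y ν = Ioo (-ξ) ξ)
    (hsteep : Tendsto (fun η => |deriv (cgf Y ν) η|) (nhdsWithin ξ (Iio ξ)) atTop)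
    (hξ₀ : ξ₀ ∈ Ioo 0 ξ)
    (hV : AntitoneOn (fun η => deriv (deriv (cgf Y ν)) η / (deriv (cgf Y ν) η) ^ 2) (Ico ξ₀ ξ))
    (hδ : δ ∈ Ioo (0 : ℝ) 1) :
    ∃ c : ℝ, 0 < c ∧ ∀ᶠ η in nhdsWithin ξ (Iio ξ),
      c ≤ (ν.tilted fun ω => η * Y ω).real
        {ω | |Y ω - deriv (cgf Y ν) η| ≤ δ * deriv (cgf Y ν) η} := by
  have htop := tendsto_deriv_cgf_atTop hξ hdom hsteep
  have hint : interior (integrableExpSet Y ν) = Ioo (-ξ) ξ := by rw [hdom, interior_Ioo]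
  have hdomev : ∀ᶠ η in nhdsWithin ξ (Iio ξ), η ∈ Ioo (-ξ) ξ := Ioo_mem_nhdsLT (by linarith)
  have hprob : ∀ᶠ η in nhdsWithin ξ (Iio ξ),
      IsProbabilityMeasure (ν.tilted fun ω => η * Y ω) := by
    filter_upwards [hdomev] with η hη
    rw [← hdom] at hη
    exact isProbabilityMeasure_tilted hη
  -- the relative variance converges, being monotone and nonnegative
  obtain ⟨v, hv0, hVlim⟩ : ∃ v : ℝ, 0 ≤ v ∧
      Tendsto (fun η => deriv (deriv (cgf Y ν)) η / (deriv (cgf Y ν) η) ^ 2)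
        (nhdsWithin ξ (Iio ξ)) (nhds v) := by
    have hnn : ∀ η ∈ Ioo ξ₀ ξ,
        0 ≤ deriv (deriv (cgf Y ν)) η / (deriv (cgf Y ν) η) ^ 2 := fun η hη =>
      div_nonneg (deriv_deriv_cgf_pos hdom
        ⟨by linarith [hη.1, hξ₀.1], hη.2⟩).le (sq_nonneg _)
    refine ⟨_, ?_, AntitoneOn.tendsto_nhdsWithin_Ioo_left (nonempty_Ioo.2 hξ₀.2)
      (hV.mono Ioo_subset_Ico_self) ⟨0, ?_⟩⟩
    · refine le_csInf ((nonempty_Ioo.2 hξ₀.2).image _) ?_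
      rintro _ ⟨η, hη, rfl⟩
      exact hnn η hη
    · rintro _ ⟨η, hη, rfl⟩
      exact hnn η hη
  rcases hv0.eq_or_lt with rfl | hv
  · -- vanishing relative variance: Chebyshev's inequality
    refine ⟨1 / 2, by norm_num, ?_⟩
    have hδ2 : 0 < δ ^ 2 / 2 := by have := hδ.1; positivity
    filter_upwards [hprob, hdomev, htop.eventually_gt_atTop 0,
      hVlim.eventually (gt_mem_nhds hδ2)] with η hp hη hT hVη
    have hmem : η ∈ interior (integrableExpSet Y ν) := by rwa [hint]
    set T := deriv (cgf Y ν) η with hTdef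
    have hδT : 0 < δ * T := mul_pos hδ.1 hT
    have hch := meas_ge_le_variance_div_sq (memLp_tilted_mul hmem 2) hδT
    rw [variance_tilted_mul hmem, integral_tilted_mul_self hmem, iteratedDeriv_succ,
      iteratedDeriv_one, ← hTdef] at hch
    have hms : MeasurableSet {ω | |Y ω - T| ≤ δ * T} :=
      measurableSet_le (by fun_prop) measurable_const
    have hcompl : (ν.tilted fun ω => η * Y ω).real {ω | |Y ω - T| ≤ δ * T}ᶜ ≤ 1 / 2 := by
      rw [measureReal_def]
      refine ENNReal.toReal_le_of_le_ofReal (by norm_num) ?_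
      refine (measure_mono fun ω hω => ?_).trans (hch.trans (ENNReal.ofReal_le_ofReal ?_))
      · exact (lt_of_not_ge (by simpa using hω)).le
      · rw [div_le_iff₀ (by positivity)]
        rw [div_lt_iff₀ (by positivity)] at hVη
        nlinarith
    have := probReal_compl_eq_one_sub (μ := ν.tilted fun ω => η * Y ω) hms
    linarith
  · -- positive limit: `(ξ - η) Y` converges in law to a Gamma variable of shape `1 / v`
    have hL : ∀ᶠ η in nhdsWithin ξ (Iio ξ), HasDerivAt (cgf Y ν) (deriv (cgf Y ν) η) η := by
      filter_upwards [hdomev] with η hη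
      exact (analyticOnNhd_cgf η (hint ▸ hη)).differentiableAt.hasDerivAt
    have hL1 : ∀ᶠ η in nhdsWithin ξ (Iio ξ),
        HasDerivAt (deriv (cgf Y ν)) (deriv (deriv (cgf Y ν)) η) η := by
      filter_upwards [hdomev] with η hη
      exact (analyticOnNhd_cgf.deriv η (hint ▸ hη)).differentiableAt.hasDerivAt
    have hmul := tendsto_mul_of_relative_variance hv hL1 htop hVlim
    have ha : 0 < 1 / v := by positivity
    have hmom : ∀ j : ℕ, ∀ᶠ η in nhdsWithin ξ (Iio ξ),
        Integrable (fun ω => exp (-((ξ - η) * Y ω)) ^ j) (ν.tilted fun ω => η * Y ω) ∧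
        ∫ ω, exp (-((ξ - η) * Y ω)) ^ j ∂(ν.tilted fun ω => η * Y ω) =
          exp (cgf Y ν (η - j * (ξ - η)) - cgf Y ν η) := by
      intro j
      have hcont : Tendsto (fun η : ℝ => η - j * (ξ - η)) (nhdsWithin ξ (Iio ξ)) (nhds ξ) := by
        have : Tendsto (fun η : ℝ => η - j * (ξ - η)) (nhds ξ) (nhds (ξ - j * (ξ - ξ))) :=
          (by fun_prop : Continuous fun η : ℝ => η - j * (ξ - η)).tendsto ξ
        rw [sub_self, mul_zero, sub_zero] at this
        exact this.mono_left nhdsWithin_le_nhds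
      filter_upwards [hdomev, hcont.eventually (lt_mem_nhds (show -ξ < ξ by linarith))]
        with η h1 h2
      refine integral_exp_neg_pow_tilted j (hdom ▸ h1) (hdom ▸ ⟨h2, ?_⟩)
      have : (0 : ℝ) ≤ j * (ξ - η) := mul_nonneg (by positivity) (by linarith [h1.2])
      linarith [h1.2]
    obtain ⟨c, hc, hev⟩ := eventually_le_measureReal_window (l := nhdsWithin ξ (Iio ξ))
      (μ := fun η => ν.tilted fun ω => η * Y ω) (Z := fun η ω => (ξ - η) * Y ω) ha hprob
      (fun η => by fun_prop) (fun j => (hmom j).mono fun η h => h.1)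
      (fun j => by
        have h1 := (Real.continuous_exp.tendsto _).comp (tendsto_sub_of_tendsto_mul hL hmul j)
        have h2 : exp (-(1 / v * log (1 + j))) = (1 / (1 + (j : ℝ))) ^ (1 / v) := by
          rw [rpow_def_of_pos (by positivity), one_div (1 + (j : ℝ)), log_inv]
          congr 1; ring
        rw [h2] at h1
        exact h1.congr' ((hmom j).mono fun η h => h.2.symm))
      (p := (1 - δ / 2) * (1 / v)) (q := (1 + δ / 2) * (1 / v))
      (mul_pos (by linarith [hδ.2]) ha) (mul_lt_mul_of_pos_right (by linarith [hδ.1]) ha)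
    refine ⟨c, hc, ?_⟩
    have hlow : (1 - δ) * (1 / v) < (1 - δ / 2) * (1 / v) :=
      mul_lt_mul_of_pos_right (by linarith [hδ.1]) ha
    have hupp : (1 + δ / 2) * (1 / v) < (1 + δ) * (1 / v) :=
      mul_lt_mul_of_pos_right (by linarith [hδ.1]) ha
    filter_upwards [hev, hprob, self_mem_nhdsWithin,
      (hmul.const_mul (1 - δ)).eventually (gt_mem_nhds hlow),
      (hmul.const_mul (1 + δ)).eventually (lt_mem_nhds hupp)] with η h1 h2 h3 h4 h5
    refine h1.trans (measureReal_mono fun ω hω => ?_)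
    have hd : 0 < ξ - η := sub_pos.2 h3
    have h6 : (ξ - η) * ((1 - δ) * deriv (cgf Y ν) η) ≤ (ξ - η) * Y ω := by
      have := hω.1; nlinarith
    have h7 : (ξ - η) * Y ω ≤ (ξ - η) * ((1 + δ) * deriv (cgf Y ν) η) := by
      have := hω.2; nlinarith
    have h8 := le_of_mul_le_mul_left h6 hd
    have h9 := le_of_mul_le_mul_left h7 hd
    rw [mem_ofPred_eq, abs_le]
    constructor <;> linarith

lemma measurable_phi (α : ℝ) : Measurable (phi α) := by
  unfold phi
  have : Measurable Real.sign := by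
    unfold Real.sign
    exact Measurable.ite (measurableSet_lt measurable_id measurable_const) measurable_const
      (Measurable.ite (measurableSet_lt measurable_const measurable_id) measurable_const
        measurable_const)
  fun_prop

theorem stmt17
    {Ω : Type*} [MeasurableSpace Ω] (P : Measure Ω) [IsProbabilityMeasure P]
    (X : Ω → ℝ) (hmeas : Measurable X)
    (α ξ : ℝ) (hα : α ∈ Set.Ioo (0:ℝ) 1) (hξ : 0 < ξ)
    -- Assumption (A1): symmetry and finite polynomial moments of all orders
    (hsymm : P.map X = P.map (fun ω => -(X ω)))
    (hmom : ∀ k : ℕ, 1 ≤ k → Integrable (fun ω => |X ω| ^ k) P)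
    -- Assumption (A2): domain of the scaled free energy is (-ξ, ξ)
    (hdom : {η : ℝ | Integrable (fun ω => Real.exp (η * phi α (X ω))) P} = Set.Ioo (-ξ) ξ)
    -- twice differentiable on the domain
    (hdiff : ∀ η ∈ Set.Ioo (-ξ) ξ,
      DifferentiableAt ℝ (lam P X α) η ∧ DifferentiableAt ℝ (deriv (lam P X α)) η)
    -- steepness
    (hsteepP : Tendsto (fun η => |deriv (lam P X α) η|) (nhdsWithin ξ (Set.Ioo (-ξ) ξ)) atTop)
    (hsteepM : Tendsto (fun η => |deriv (lam P X α) η|)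
      (nhdsWithin (-ξ) (Set.Ioo (-ξ) ξ)) atTop)
    -- bounded relative variance
    (ξ₀ w : ℝ) (hξ₀ : ξ₀ ∈ Set.Ioo 0 ξ) (hw : 0 < w)
    (hmono : MonotoneOn (deriv (deriv (lam P X α))) (Set.Ico ξ₀ ξ))
    (hVmono : AntitoneOn
      (fun η => deriv (deriv (lam P X α)) η / (deriv (lam P X α) η) ^ 2) (Set.Ico ξ₀ ξ))
    (hVbound : ∀ η ∈ Set.Ioo ξ₀ ξ,
      deriv (deriv (lam P X α)) η / (deriv (lam P X α) η) ^ 2 ≤ w)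
    (x γ : ℝ) (hx : 0 < x) (hγ : γ ∈ Set.Ioo 0 x) :
    -- for large n there is a unique η_n ∈ (0,ξ) with λ_α'(η_n) = (nx)^α, and the tilted
    -- law gives mass at least c > 0 to the fluctuation window
    ∃ (η : ℕ → ℝ) (c : ℝ) (N : ℕ), 0 < c ∧ ∀ n ≥ N,
      (η n ∈ Set.Ioo 0 ξ ∧ deriv (lam P X α) (η n) = ((n : ℝ) * x) ^ α ∧
        (∀ η' ∈ Set.Ioo 0 ξ, deriv (lam P X α) η' = ((n : ℝ) * x) ^ α → η' = η n)) ∧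
      ENNReal.ofReal c ≤
        ((P.map X).tilted fun y => η n * phi α y)
          {y | ((n : ℝ) * x) ^ α - ((n : ℝ) * γ) ^ α ≤ phi α y ∧
               phi α y ≤ ((n : ℝ) * x) ^ α + ((n : ℝ) * γ) ^ α} := by
  have hphi : Measurable (phi α) := measurable_phi α
  have hν : IsProbabilityMeasure (P.map X) := Measure.isProbabilityMeasure_map hmeas.aemeasurable
  have hlam : lam P X α = cgf (phi α) (P.map X) := by
    funext η
    rw [lam, cgf, mgf, integral_map hmeas.aemeasurable (by fun_prop)]
  have hdom' : integrableExpSet (phi α) (P.map X) = Ioo (-ξ) ξ := by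
    rw [← hdom]
    ext η
    exact integrable_map_measure (by fun_prop) hmeas.aemeasurable
  rw [hlam] at hsteepP hVmono hdiff ⊢
  set L := cgf (phi α) (P.map X) with hLdef
  have hsteep : Tendsto (fun η => |deriv L η|) (nhdsWithin ξ (Iio ξ)) atTop := by
    rwa [nhdsWithin_Ioo_eq_nhdsLT (by linarith : -ξ < ξ)] at hsteepP
  have htop := tendsto_deriv_cgf_atTop hξ hdom' hsteep
  have hsm := strictMonoOn_deriv_cgf hdom'
  rw [← hLdef] at htop hsm
  -- the half-width of the window is a fixed fraction `(γ / x) ^ α` of its centre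
  have hδ : (γ / x) ^ α ∈ Ioo (0 : ℝ) 1 :=
    ⟨rpow_pos_of_pos (div_pos hγ.1 hx) _,
      rpow_lt_one (div_pos hγ.1 hx).le ((div_lt_one hx).2 hγ.2) hα.1⟩
  obtain ⟨c, hc, hev⟩ := eventually_le_tilted_window hphi hξ hdom' hsteep hξ₀ hVmono hδ
  obtain ⟨b, hb, hbs⟩ := mem_nhdsLT_iff_exists_Ioo_subset.1 hev
  -- beyond `bmax = max b 0` the window estimate holds
  set bmax := max b 0 with hmdef
  have hmξ : bmax < ξ := max_lt hb hξ
  have hm0 : 0 ≤ bmax := le_max_right _ _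
  have hgrow : Tendsto (fun n : ℕ => ((n : ℝ) * x) ^ α) atTop atTop :=
    (tendsto_rpow_atTop hα.1).comp (tendsto_natCast_atTop_atTop.atTop_mul_const hx)
  obtain ⟨N, hN⟩ := eventually_atTop.1 (hgrow.eventually_gt_atTop (deriv L bmax))
  have hex : ∀ n : ℕ, ∃ η : ℝ, N ≤ n → η ∈ Ioo bmax ξ ∧ deriv L η = ((n : ℝ) * x) ^ α := by
    intro n
    by_cases hn : N ≤ n
    · obtain ⟨d, hd1, hd2⟩ := ((htop.eventually_gt_atTop (((n : ℝ) * x) ^ α)).and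
        (Ioo_mem_nhdsLT hmξ)).exists
      obtain ⟨η, hη, hηe⟩ := intermediate_value_Ioo (f := deriv L) hd2.1.le
        (fun s hs => (hdiff s ⟨by linarith [hs.1],
          hs.2.trans_lt hd2.2⟩).2.continuousAt.continuousWithinAt)
        ⟨hN n hn, hd1⟩
      exact ⟨η, fun _ => ⟨⟨hη.1, hη.2.trans hd2.2⟩, hηe⟩⟩
    · exact ⟨0, fun h => absurd h hn⟩
  choose η hη using hex
  refine ⟨η, c, N, hc, fun n hn => ?_⟩
  obtain ⟨hmem, heq⟩ := hη n hn
  have hη0 : 0 < η n := hm0.trans_lt hmem.1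
  refine ⟨⟨⟨hη0, hmem.2⟩, heq, fun η' h1 h2 => ?_⟩, ?_⟩
  · exact hsm.injOn ⟨by linarith [h1.1], h1.2⟩ ⟨by linarith, hmem.2⟩ (h2.trans heq.symm)
  · have h1 := hbs ⟨(le_max_left b 0).trans_lt hmem.1, hmem.2⟩
    rw [mem_ofPred_eq, ← hLdef, heq] at h1
    have hw' : (γ / x) ^ α * ((n : ℝ) * x) ^ α = ((n : ℝ) * γ) ^ α := by
      rw [← mul_rpow (div_pos hγ.1 hx).le (by positivity)]
      congr 1
      field_simp
    rw [hw'] at h1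
    have hset : {y | |phi α y - ((n : ℝ) * x) ^ α| ≤ ((n : ℝ) * γ) ^ α} =
        {y | ((n : ℝ) * x) ^ α - ((n : ℝ) * γ) ^ α ≤ phi α y ∧
               phi α y ≤ ((n : ℝ) * x) ^ α + ((n : ℝ) * γ) ^ α} := by
      ext y
      simp only [mem_ofPred_eq, abs_le]
      constructor <;> rintro ⟨h3, h4⟩ <;> constructor <;> linarith
    rw [hset, measureReal_def] at h1
    exact ENNReal.ofReal_le_of_le_toReal h1
end
end

section
/- Let Assumptions (A1) and (A2) hold, let x > 0 and let 0 < θ < ξ x^{α−1}. Then there exists q > 1 such that (1/n^α) · E[ 1_{{X < nx}} exp( q θ n^{α−1} X ) ]^{1/q} → 0 as n → ∞. -/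
/-!
Put `η = q θ x^(1-α)`. On `{0 < X < n x}` we have `n^(α-1) X ≤ x^(1-α) X^α`, because
`X^(1-α) ≤ (n x)^(1-α)`; hence the integrand is at most `exp (η φ_α(X))` there, and it is at
most `1` on `{X ≤ 0}`. The assumption `θ < ξ x^(α-1)` leaves room for some `q > 1` with `η < ξ`,
so that `exp (η φ_α(X))` is integrable. The truncated expectations are then bounded uniformly
in `n`, and the factor `n^(-α)` sends the product to zero.
-/

open MeasureTheory ProbabilityTheory Filter Real Set

noncomputable section

lemma rpow_sub_one_mul_le {α n x t : ℝ} (hα : α < 1) (hn : 0 < n) (hx : 0 < x) (ht : 0 < t)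
    (htn : t < n * x) : n ^ (α - 1) * t ≤ x ^ (1 - α) * t ^ α := by
  have h1 : t = t ^ (1 - α) * t ^ α := by
    rw [← Real.rpow_add ht]; simp
  have h2 : t ^ (1 - α) ≤ n ^ (1 - α) * x ^ (1 - α) := by
    rw [← Real.mul_rpow hn.le hx.le]
    exact Real.rpow_le_rpow ht.le htn.le (by linarith)
  have h3 : n ^ (α - 1) * n ^ (1 - α) = 1 := by
    rw [← Real.rpow_add hn]; simp
  calc n ^ (α - 1) * t = n ^ (α - 1) * (t ^ (1 - α) * t ^ α) := by rw [← h1]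
    _ ≤ n ^ (α - 1) * ((n ^ (1 - α) * x ^ (1 - α)) * t ^ α) := by gcongr
    _ = (n ^ (α - 1) * n ^ (1 - α)) * (x ^ (1 - α) * t ^ α) := by ring
    _ = x ^ (1 - α) * t ^ α := by rw [h3, one_mul]

/-- Pointwise domination of the truncated exponential, uniformly in `n`. The summand `1` accounts
for `t ≤ 0`. -/
lemma exp_le_one_add_exp_phi {α n x t c : ℝ} (hα : α < 1) (hn : 0 < n) (hx : 0 < x) (hc : 0 < c)
    (htn : t < n * x) :
    Real.exp (c * n ^ (α - 1) * t) ≤ 1 + Real.exp (c * x ^ (1 - α) * phi α t) := by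
  rcases le_or_gt t 0 with ht | ht
  · have : Real.exp (c * n ^ (α - 1) * t) ≤ 1 :=
      Real.exp_le_one_iff.2 (mul_nonpos_of_nonneg_of_nonpos (by positivity) ht)
    linarith [Real.exp_pos (c * x ^ (1 - α) * phi α t)]
  · have hphi : phi α t = t ^ α := by
      simp [phi, Real.sign_of_pos ht, abs_of_pos ht]
    have : Real.exp (c * n ^ (α - 1) * t) ≤ Real.exp (c * x ^ (1 - α) * phi α t) := by
      rw [hphi, Real.exp_le_exp, mul_assoc, mul_assoc]
      exact mul_le_mul_of_nonneg_left (rpow_sub_one_mul_le hα hn hx ht htn) hc.le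
    linarith

theorem stmt18
    {Ω : Type*} [MeasurableSpace Ω] (P : Measure Ω) [IsProbabilityMeasure P]
    (X : Ω → ℝ) (hmeas : Measurable X)
    (α ξ : ℝ) (hα : α ∈ Set.Ioo (0:ℝ) 1) (hξ : 0 < ξ)
    -- Assumption (A1): symmetry and finite polynomial moments of all orders
    (hsymm : P.map X = P.map (fun ω => -(X ω)))
    (hmom : ∀ k : ℕ, 1 ≤ k → Integrable (fun ω => |X ω| ^ k) P)
    -- Assumption (A2): domain of the scaled free energy is (-ξ, ξ)
    (hdom : {η : ℝ | Integrable (fun ω => Real.exp (η * phi α (X ω))) P} = Set.Ioo (-ξ) ξ)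
    -- twice differentiable on the domain
    (hdiff : ∀ η ∈ Set.Ioo (-ξ) ξ,
      DifferentiableAt ℝ (lam P X α) η ∧ DifferentiableAt ℝ (deriv (lam P X α)) η)
    -- steepness
    (hsteepP : Tendsto (fun η => |deriv (lam P X α) η|) (nhdsWithin ξ (Set.Ioo (-ξ) ξ)) atTop)
    (hsteepM : Tendsto (fun η => |deriv (lam P X α) η|)
      (nhdsWithin (-ξ) (Set.Ioo (-ξ) ξ)) atTop)
    -- bounded relative variance
    (ξ₀ w : ℝ) (hξ₀ : ξ₀ ∈ Set.Ioo 0 ξ) (hw : 0 < w)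
    (hmono : MonotoneOn (deriv (deriv (lam P X α))) (Set.Ico ξ₀ ξ))
    (hVmono : AntitoneOn
      (fun η => deriv (deriv (lam P X α)) η / (deriv (lam P X α) η) ^ 2) (Set.Ico ξ₀ ξ))
    (hVbound : ∀ η ∈ Set.Ioo ξ₀ ξ,
      deriv (deriv (lam P X α)) η / (deriv (lam P X α) η) ^ 2 ≤ w)
    (x θ : ℝ) (hx : 0 < x) (hθ : 0 < θ) (hθξ : θ < ξ * x ^ (α - 1)) :
    ∃ q : ℝ, 1 < q ∧
      Tendsto (fun n : ℕ =>
          ((n : ℝ) ^ α)⁻¹ *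
            (∫ ω in {ω | X ω < (n : ℝ) * x},
              Real.exp (q * θ * (n : ℝ) ^ (α - 1) * X ω) ∂P) ^ (1 / q))
        atTop (nhds 0) := by
  have hxx : x ^ (α - 1) * x ^ (1 - α) = 1 := by
    rw [← Real.rpow_add hx]; simp
  have hxp : 0 < x ^ (1 - α) := Real.rpow_pos_of_pos hx _
  have hb : θ * x ^ (1 - α) < ξ := by
    calc θ * x ^ (1 - α) < ξ * x ^ (α - 1) * x ^ (1 - α) := by gcongr
      _ = ξ := by rw [mul_assoc, hxx, mul_one]
  have hb0 : 0 < θ * x ^ (1 - α) := by positivity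
  obtain ⟨q, hq1, hq2⟩ := exists_between ((one_lt_div hb0).2 hb)
  rw [lt_div_iff₀ hb0] at hq2
  have hq0 : 0 < q := by linarith
  refine ⟨q, hq1, ?_⟩
  have hη : q * θ * x ^ (1 - α) ∈ Set.Ioo (-ξ) ξ := by
    have : 0 < q * (θ * x ^ (1 - α)) := by positivity
    constructor <;> linarith
  have hint : Integrable (fun ω => Real.exp (q * θ * x ^ (1 - α) * phi α (X ω))) P := by
    rw [← hdom] at hη
    exact hη
  set g : Ω → ℝ := fun ω => 1 + Real.exp (q * θ * x ^ (1 - α) * phi α (X ω)) with hg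
  have hgint : Integrable g P := (integrable_const 1).add hint
  have hg0 : ∀ ω, 0 ≤ g ω := fun ω => by positivity
  have hbound : ∀ n : ℕ, 1 ≤ n →
      ∫ ω in {ω | X ω < (n : ℝ) * x}, Real.exp (q * θ * (n : ℝ) ^ (α - 1) * X ω) ∂P
        ≤ ∫ ω, g ω ∂P := by
    intro n hn
    have hn' : (0 : ℝ) < n := by exact_mod_cast hn
    have hs : MeasurableSet {ω | X ω < (n : ℝ) * x} := measurableSet_lt hmeas measurable_const
    refine le_trans (integral_mono_of_nonneg (.of_forall fun ω => (Real.exp_pos _).le)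
      hgint.integrableOn ?_) (setIntegral_le_integral hgint (.of_forall hg0))
    filter_upwards [ae_restrict_mem hs] with ω hω
    exact exp_le_one_add_exp_phi hα.2 hn' hx (by positivity) hω
  have hlim : Tendsto (fun n : ℕ => ((n : ℝ) ^ α)⁻¹ * (∫ ω, g ω ∂P) ^ (1 / q)) atTop (nhds 0) := by
    have h := ((tendsto_rpow_atTop hα.1).comp tendsto_natCast_atTop_atTop).inv_tendsto_atTop
    simpa using h.mul_const ((∫ ω, g ω ∂P) ^ (1 / q))
  have hI0 : ∀ n : ℕ, 0 ≤
      ∫ ω in {ω | X ω < (n : ℝ) * x}, Real.exp (q * θ * (n : ℝ) ^ (α - 1) * X ω) ∂P :=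
    fun n => integral_nonneg fun ω => (Real.exp_pos _).le
  refine tendsto_of_tendsto_of_tendsto_of_le_of_le' tendsto_const_nhds hlim
    (.of_forall fun n => mul_nonneg (by positivity) (Real.rpow_nonneg (hI0 n) _)) ?_
  filter_upwards [eventually_ge_atTop 1] with n hn
  exact mul_le_mul_of_nonneg_left
    (Real.rpow_le_rpow (hI0 n) (hbound n hn) (by positivity)) (by positivity)
end
end
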